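/- arXiv:1810.13266 — 2 statements merged into one kernel-verified Lean document; each statement's English description precedes it below -/
import Mathlib

section
/- Let H be a cohomology theory on C^□ with values in an abelian category A, and let Φ : ∅ = X_{−1} ⊆ X_0 ⊆ ⋯ ⊆ X_d = X be a good M-filtration of dimensional type d of X. Then for every 0 ≤ p ≤ d: (i) the restriction map H^p(X) → H^p(X_p) (induced by the inclusions X_p ⊆ X_{p+1} ⊆ ⋯ ⊆ X_d = X) is a monomorphism, and (ii) there is a unique isomorphism θ^p : H^p(C^*(X)) → H^p(X) from the p-th cohomology object of the coniveau complex to H^p(X) such that the composite of the canonical epimorphism ker(d^p) → H^p(C^*(X)), θ^p, and the restriction H^p(X) → H^p(X_p) equals the composite of the inclusion ker(d^p) ↪ H^p(X_p, X_{p−1}) with the functoriality map H^p(X_p, X_{p−1}) → H^p(X_p). In particular H^p(X) is isomorphic to the p-th cohomology of the coniveau complex of any good M-filtration (degeneration of the coniveau spectral sequence for good filtrations). -/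
/-!
Write `h^n(q) = H^n(X_q)`. A pair `(X, Y)` whose inclusion is an isomorphism has no cohomology, so
the vanishing `H^m(X_q, X_{q-1}) = 0` for `m ≠ q` assumed for `0 ≤ q ≤ d` holds for every `q : ℤ`
(`isZero_step`). The long exact sequences of the triples `∅ ⊆ X_{q-1} ⊆ X_q` then give:

* `h^m(q) = 0` for `q < m`, by induction on `q` (`isZero_obj`);
* `H^p(X_p, X_{p-1}) → h^p(p)` is an epimorphism, its cokernel embedding in `h^p(p-1) = 0`
  (`epi_resStep`), and its kernel is the image of the connecting map out of `h^{p-1}(p-1)`, which is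
  also the image of `d^{p-1}`, because `d^{p-1}` is that map precomposed with the epimorphism
  `H^{p-1}(X_{p-1}, X_{p-2}) → h^{p-1}(p-1)` (`exact_diff_resStep`);
* `h^p(q) → h^p(q-1)` is an isomorphism for `q ≥ p + 2` and a monomorphism for `q = p + 1`, so
  `h^p(d) → h^p(p)` is the kernel of the connecting map `h^p(p) → H^{p+1}(X_{p+1}, X_p)`
  (`mono_exact_resTop`).

Hence `d^p` factors as the epimorphism `H^p(X_p, X_{p-1}) → h^p(p)` with kernel `im d^{p-1}`
followed by a map with kernel `h^p(d)`, and `ker d^p / im d^{p-1}` is `h^p(d)`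
(`existsUnique_homology_iso`).
-/

open CategoryTheory CategoryTheory.Limits

universe v u v' u'

/-- The data of a subcategory `M` of distinguished monomorphisms of `C` (saturated, containing
all isomorphisms, closed under composition), together with a strict initial object `∅` such
that `∅ ⟶ X` is distinguished for every `X`. -/
structure MData (C : Type u) [Category.{v} C] where
  mem : ∀ ⦃Y X : C⦄, (Y ⟶ X) → Prop
  mono_of_mem : ∀ ⦃Y X : C⦄ (f : Y ⟶ X), mem f → Mono f
  mem_of_isIso : ∀ ⦃Y X : C⦄ (f : Y ⟶ X), IsIso f → mem f
  mem_comp : ∀ ⦃Z Y X : C⦄ (g : Z ⟶ Y) (f : Y ⟶ X), mem g → mem f → mem (g ≫ f)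
  saturated : ∀ ⦃Z Y X : C⦄ (g : Z ⟶ Y) (f : Y ⟶ X), mem f → mem (g ≫ f) → mem g
  empty : C
  isInitialEmpty : IsInitial empty
  strictInitial : ∀ ⦃X : C⦄ (f : X ⟶ empty), IsIso f
  mem_emptyTo : ∀ X : C, mem (isInitialEmpty.to X)

variable {C : Type u} [Category.{v} C]

/-- An object of the category of pairs `C^□`: a distinguished monomorphism `Y ↪ X` in `M`. -/
structure MPair (M : MData C) where
  X : C
  Y : C
  i : Y ⟶ X
  mem : M.mem i

/-- The pair `(X, ∅)`, written `H^n(X) := H^n(X, ∅)`. -/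
def MData.pairOf (M : MData C) (X : C) : MPair M :=
  ⟨X, M.empty, M.isInitialEmpty.to X, M.mem_emptyTo X⟩

/-- A triple `Z ⊆ Y ⊆ X` of composable distinguished monomorphisms. -/
structure MTriple (M : MData C) where
  X : C
  Y : C
  Z : C
  iYX : Y ⟶ X
  iZY : Z ⟶ Y
  memYX : M.mem iYX
  memZY : M.mem iZY

/-- The pair `(X, Y)` of a triple. -/
def MTriple.pairXY {M : MData C} (T : MTriple M) : MPair M := ⟨T.X, T.Y, T.iYX, T.memYX⟩

/-- The pair `(Y, Z)` of a triple. -/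
def MTriple.pairYZ {M : MData C} (T : MTriple M) : MPair M := ⟨T.Y, T.Z, T.iZY, T.memZY⟩

/-- The pair `(X, Z)` of a triple. -/
def MTriple.pairXZ {M : MData C} (T : MTriple M) : MPair M :=
  ⟨T.X, T.Z, T.iZY ≫ T.iYX, M.mem_comp _ _ T.memZY T.memYX⟩

/-- A cohomology theory on `C^□` with values in an abelian category `A`:
a `ℤ`-indexed family of contravariant functors `H^n : (C^□)^op ⥤ A` together with connecting
morphisms `δ^n : H^n(Y,Z) ⟶ H^{n+1}(X,Y)` for every triple `Z ⊆ Y ⊆ X`, natural in the triple,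
such that the long sequence
`⋯ → H^n(X,Y) → H^n(X,Z) → H^n(Y,Z) → H^{n+1}(X,Y) → ⋯` is exact. -/
structure CohomologyTheory (M : MData C) (A : Type u') [Category.{v'} A] [Abelian A] where
  H : ℤ → MPair M → A
  map : ∀ (n : ℤ) (P Q : MPair M) (fX : P.X ⟶ Q.X) (fY : P.Y ⟶ Q.Y),
    P.i ≫ fX = fY ≫ Q.i → (H n Q ⟶ H n P)
  map_id : ∀ (n : ℤ) (P : MPair M) (h : P.i ≫ 𝟙 P.X = 𝟙 P.Y ≫ P.i),
    map n P P (𝟙 P.X) (𝟙 P.Y) h = 𝟙 (H n P)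
  map_comp : ∀ (n : ℤ) (P Q R : MPair M) (fX : P.X ⟶ Q.X) (fY : P.Y ⟶ Q.Y)
    (hf : P.i ≫ fX = fY ≫ Q.i) (gX : Q.X ⟶ R.X) (gY : Q.Y ⟶ R.Y)
    (hg : Q.i ≫ gX = gY ≫ R.i) (hfg : P.i ≫ (fX ≫ gX) = (fY ≫ gY) ≫ R.i),
    map n P R (fX ≫ gX) (fY ≫ gY) hfg = map n Q R gX gY hg ≫ map n P Q fX fY hf
  δ : ∀ (n : ℤ) (T : MTriple M), H n T.pairYZ ⟶ H (n + 1) T.pairXY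
  δ_natural : ∀ (n : ℤ) (T T' : MTriple M) (fX : T.X ⟶ T'.X) (fY : T.Y ⟶ T'.Y)
    (fZ : T.Z ⟶ T'.Z) (hXY : T.iYX ≫ fX = fY ≫ T'.iYX) (hYZ : T.iZY ≫ fY = fZ ≫ T'.iZY),
    map n T.pairYZ T'.pairYZ fY fZ hYZ ≫ δ n T = δ n T' ≫ map (n + 1) T.pairXY T'.pairXY fX fY hXY
  comp_res_res : ∀ (n : ℤ) (T : MTriple M)
    (h₁ : T.pairXZ.i ≫ 𝟙 T.X = T.iZY ≫ T.pairXY.i)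
    (h₂ : T.pairYZ.i ≫ T.iYX = 𝟙 T.Z ≫ T.pairXZ.i),
    map n T.pairXZ T.pairXY (𝟙 T.X) T.iZY h₁ ≫ map n T.pairYZ T.pairXZ T.iYX (𝟙 T.Z) h₂ = 0
  exact_res_res : ∀ (n : ℤ) (T : MTriple M)
    (h₁ : T.pairXZ.i ≫ 𝟙 T.X = T.iZY ≫ T.pairXY.i)
    (h₂ : T.pairYZ.i ≫ T.iYX = 𝟙 T.Z ≫ T.pairXZ.i),
    (ShortComplex.mk _ _ (comp_res_res n T h₁ h₂)).Exact
  comp_res_δ : ∀ (n : ℤ) (T : MTriple M)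
    (h₂ : T.pairYZ.i ≫ T.iYX = 𝟙 T.Z ≫ T.pairXZ.i),
    map n T.pairYZ T.pairXZ T.iYX (𝟙 T.Z) h₂ ≫ δ n T = 0
  exact_res_δ : ∀ (n : ℤ) (T : MTriple M)
    (h₂ : T.pairYZ.i ≫ T.iYX = 𝟙 T.Z ≫ T.pairXZ.i),
    (ShortComplex.mk _ _ (comp_res_δ n T h₂)).Exact
  comp_δ_res : ∀ (n : ℤ) (T : MTriple M)
    (h₁ : T.pairXZ.i ≫ 𝟙 T.X = T.iZY ≫ T.pairXY.i),
    δ n T ≫ map (n + 1) T.pairXZ T.pairXY (𝟙 T.X) T.iZY h₁ = 0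
  exact_δ_res : ∀ (n : ℤ) (T : MTriple M)
    (h₁ : T.pairXZ.i ≫ 𝟙 T.X = T.iZY ≫ T.pairXY.i),
    (ShortComplex.mk _ _ (comp_δ_res n T h₁)).Exact

variable {A : Type u'} [Category.{v'} A] [Abelian A]

/-- An `M`-filtration of dimensional type `d` :
`∅ = X_{-1} ⊆ X_0 ⊆ ⋯ ⊆ X_d = X`, extended constantly outside `[-1, d]`. -/
structure MFiltration (M : MData C) (d : ℤ) where
  obj : ℤ → C
  ι : ∀ p : ℤ, obj (p - 1) ⟶ obj p
  mem_ι : ∀ p : ℤ, M.mem (ι p)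
  isInitialBot : ∀ p : ℤ, p ≤ -1 → IsInitial (obj p)
  isIsoTop : ∀ p : ℤ, d + 1 ≤ p → IsIso (ι p)

namespace MFiltration

variable {M : MData C} {d : ℤ}

/-- The pair `(X_p, X_{p-1})` of a filtration. -/
def pairStep (Φ : MFiltration M d) (p : ℤ) : MPair M :=
  ⟨Φ.obj p, Φ.obj (p - 1), Φ.ι p, Φ.mem_ι p⟩

/-- The triple `∅ ⊆ X_{q-1} ⊆ X_q` of a filtration. -/
def tripleAt (Φ : MFiltration M d) (q : ℤ) : MTriple M :=
  ⟨Φ.obj q, Φ.obj (q - 1), M.empty, Φ.ι q, M.isInitialEmpty.to _, Φ.mem_ι q, M.mem_emptyTo _⟩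

/-- The functoriality map `H^n(X_p, X_{p-1}) ⟶ H^n(X_p) = H^n(X_p, ∅)`. -/
def resStep (Φ : MFiltration M d) (HT : CohomologyTheory M A) (n p : ℤ) :
    HT.H n (Φ.pairStep p) ⟶ HT.H n (M.pairOf (Φ.obj p)) :=
  HT.map n (M.pairOf (Φ.obj p)) (Φ.pairStep p) (𝟙 (Φ.obj p))
    (M.isInitialEmpty.to (Φ.obj (p - 1))) (M.isInitialEmpty.hom_ext _ _)

/-- The differential `d^p : H^p(X_p, X_{p-1}) ⟶ H^{p+1}(X_{p+1}, X_p)` of the coniveau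
complex: the composite of the functoriality map `H^p(X_p, X_{p-1}) → H^p(X_p)` with the
connecting morphism `δ^p : H^p(X_p) → H^{p+1}(X_{p+1}, X_p)` of the triple
`∅ ⊆ X_p ⊆ X_{p+1}`. -/
def diff (Φ : MFiltration M d) (HT : CohomologyTheory M A) (p : ℤ) :
    HT.H p (Φ.pairStep p) ⟶ HT.H (p + 1) (Φ.pairStep (p + 1)) :=
  Φ.resStep HT p p ≫
    eqToHom (congrArg (fun q => HT.H p (M.pairOf (Φ.obj q))) (by omega : p = p + 1 - 1)) ≫
    HT.δ p (Φ.tripleAt (p + 1))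

/-- A filtration is good if `H^m(X_p, X_{p-1}) = 0` for all `m ≠ p` and `0 ≤ p ≤ d`. -/
def IsGood (Φ : MFiltration M d) (HT : CohomologyTheory M A) : Prop :=
  ∀ p m : ℤ, 0 ≤ p → p ≤ d → m ≠ p → IsZero (HT.H m (Φ.pairStep p))

/-- The coniveau complex `C^*(X)` with `C^p(X) = H^p(X_p, X_{p-1})`. -/
def coniveau (Φ : MFiltration M d) (HT : CohomologyTheory M A)
    (hdd : ∀ p : ℤ, Φ.diff HT p ≫ Φ.diff HT (p + 1) = 0) : CochainComplex A ℤ :=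
  CochainComplex.of (fun p => HT.H p (Φ.pairStep p)) (fun p => Φ.diff HT p) hdd

/-- One step inclusion `X_p ⟶ X_{p+1}`. -/
def inclStep (Φ : MFiltration M d) (p : ℤ) : Φ.obj p ⟶ Φ.obj (p + 1) :=
  eqToHom (by rw [add_sub_cancel_right]) ≫ Φ.ι (p + 1)

/-- The inclusion `X_p ⟶ X_{p+n}`. -/
def inclAux (Φ : MFiltration M d) (p : ℤ) : (n : ℕ) → (Φ.obj p ⟶ Φ.obj (p + n))
  | 0 => eqToHom (by norm_num)
  | (n + 1) => Φ.inclAux p n ≫ Φ.inclStep (p + n) ≫ eqToHom (congrArg Φ.obj (by push_cast; ring))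

/-- The inclusion `X_p ⟶ X_q` for `p ≤ q`. -/
def inclLE (Φ : MFiltration M d) (p q : ℤ) (h : p ≤ q) : Φ.obj p ⟶ Φ.obj q :=
  Φ.inclAux p (q - p).toNat ≫ eqToHom (congrArg Φ.obj (by omega))

/-- The restriction `H^n(X) ⟶ H^n(X_p)` induced by the inclusion `X_p ⊆ X_d = X`. -/
def resTop (Φ : MFiltration M d) (HT : CohomologyTheory M A) (n p : ℤ) (h : p ≤ d) :
    HT.H n (M.pairOf (Φ.obj d)) ⟶ HT.H n (M.pairOf (Φ.obj p)) :=
  HT.map n (M.pairOf (Φ.obj p)) (M.pairOf (Φ.obj d)) (Φ.inclLE p d h) (𝟙 M.empty)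
    (M.isInitialEmpty.hom_ext _ _)

/-- The map `H^n(Ψ_p, Ψ_{p-1}) ⟶ H^n(Φ_p, Φ_{p-1})` induced by a levelwise morphism of
filtrations. -/
def stepMap {d' : ℤ} (Φ : MFiltration M d) (Ψ : MFiltration M d')
    (HT : CohomologyTheory M A) (g : ∀ p : ℤ, Φ.obj p ⟶ Ψ.obj p)
    (hg : ∀ p : ℤ, Φ.ι p ≫ g p = g (p - 1) ≫ Ψ.ι p) (n p : ℤ) :
    HT.H n (Ψ.pairStep p) ⟶ HT.H n (Φ.pairStep p) :=
  HT.map n (Φ.pairStep p) (Ψ.pairStep p) (g p) (g (p - 1)) (hg p)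

end MFiltration

/-! ### Homology of a three-term complex whose second map factors -/

/-- If `S.g` factors as an epimorphism `s` with kernel the image of `S.f`, followed by a map `t`
with kernel `m`, then the homology of `S` is canonically the source of `m`. -/
theorem existsUnique_homology_iso {A : Type u'} [Category.{v'} A] [Abelian A]
    (S : ShortComplex A) {Y K : A} (s : S.X₂ ⟶ Y) (t : Y ⟶ S.X₃) (m : K ⟶ Y)
    [Epi s] [Mono m] (hg : S.g = s ≫ t)
    (w₁ : S.f ≫ s = 0) (h₁ : (ShortComplex.mk S.f s w₁).Exact)
    (w₂ : m ≫ t = 0) (h₂ : (ShortComplex.mk m t w₂).Exact) :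
    ∃! θ : S.homology ⟶ K, IsIso θ ∧ S.homologyπ ≫ θ ≫ m = S.iCycles ≫ s := by
  have hc : (S.iCycles ≫ s) ≫ t = 0 := by rw [Category.assoc, ← hg, S.iCycles_g]
  have : Mono (ShortComplex.mk m t w₂).f := ‹Mono m›
  let u : S.cycles ⟶ K := h₂.lift (S.iCycles ≫ s) hc
  have hu : u ≫ m = S.iCycles ≫ s := h₂.lift_f _ _
  have hu0 : S.toCycles ≫ u = 0 := by
    rw [← cancel_mono m, Category.assoc, hu, S.toCycles_i_assoc, w₁, zero_comp]
  let θ : S.homology ⟶ K := S.descHomology u hu0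
  have hθ : S.homologyπ ≫ θ = u := S.π_descHomology _ _
  have hepi : Epi θ := by
    have : Epi u := by
      rw [epi_iff_surjective_up_to_refinements]
      intro B y
      obtain ⟨B', π, hπ, x, hx⟩ := surjective_up_to_refinements_of_epi s (y ≫ m)
      refine ⟨B', π, hπ, S.liftCycles x ?_, ?_⟩
      · rw [hg, ← Category.assoc, ← hx, Category.assoc, Category.assoc, w₂, comp_zero, comp_zero]
      · rw [← cancel_mono m, Category.assoc, Category.assoc, hu, S.liftCycles_i_assoc, hx]
    exact epi_of_epi_fac hθ
  have hmono : Mono θ := by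
    refine Preadditive.mono_of_cancel_zero _ fun {B} x hx => ?_
    obtain ⟨B', π, hπ, z, hz⟩ := surjective_up_to_refinements_of_epi S.homologyπ x
    have hzs : (z ≫ S.iCycles) ≫ s = 0 := by
      rw [Category.assoc, ← hu, ← hθ, Category.assoc, ← Category.assoc, ← hz, Category.assoc,
        reassoc_of% hx, zero_comp, comp_zero]
    obtain ⟨B'', π', hπ', y, hy⟩ := h₁.exact_up_to_refinements (z ≫ S.iCycles) hzs
    dsimp at y hy
    have hzy : π' ≫ z = y ≫ S.toCycles := by
      rw [← cancel_mono S.iCycles, Category.assoc, Category.assoc, S.toCycles_i, hy]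
    rw [← cancel_epi π, ← cancel_epi π', hz, reassoc_of% hzy, S.toCycles_comp_homologyπ]
    simp
  refine ⟨θ, ⟨isIso_of_mono_of_epi θ, ?_⟩, ?_⟩
  · rw [← Category.assoc, hθ, hu]
  · rintro θ' ⟨-, h⟩
    rw [← cancel_epi S.homologyπ, ← cancel_mono m, Category.assoc, h, hθ, hu]

/-! ### Cohomology theories on pairs -/

namespace CohomologyTheory

variable {M : MData C} (HT : CohomologyTheory M A)

/-- The restriction `H^n(Y) ⟶ H^n(X)` along a morphism `X ⟶ Y`. -/
def res (n : ℤ) {X Y : C} (f : X ⟶ Y) : HT.H n (M.pairOf Y) ⟶ HT.H n (M.pairOf X) :=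
  HT.map n (M.pairOf X) (M.pairOf Y) f (𝟙 M.empty) (M.isInitialEmpty.hom_ext _ _)

theorem res_id (n : ℤ) (X : C) : HT.res n (𝟙 X) = 𝟙 _ :=
  HT.map_id n (M.pairOf X) _

theorem res_comp (n : ℤ) {X Y Z : C} (f : X ⟶ Y) (g : Y ⟶ Z) :
    HT.res n (f ≫ g) = HT.res n g ≫ HT.res n f := by
  have h := HT.map_comp n (M.pairOf X) (M.pairOf Y) (M.pairOf Z) f (𝟙 M.empty)
    (M.isInitialEmpty.hom_ext _ _) g (𝟙 M.empty) (M.isInitialEmpty.hom_ext _ _)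
    (M.isInitialEmpty.hom_ext _ _)
  unfold res
  rw [← h]
  congr 1
  exact M.isInitialEmpty.hom_ext _ _

instance isIso_res (n : ℤ) {X Y : C} (f : X ⟶ Y) [IsIso f] : IsIso (HT.res n f) :=
  ⟨HT.res n (inv f), by rw [← res_comp, IsIso.inv_hom_id, res_id],
    by rw [← res_comp, IsIso.hom_inv_id, res_id]⟩

/-! The inclusion `Z ⟶ X` of a triple is only propositionally equal to the map from `∅` used in
`MData.pairOf`; in the next three lemmas it is an arbitrary `j` with a proof of equality. -/

theorem exact_res_res' (n : ℤ) (T : MTriple M) (j : T.Z ⟶ T.X) (hj : M.mem j)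
    (e : j = T.iZY ≫ T.iYX) (h₁ : j ≫ 𝟙 T.X = T.iZY ≫ T.pairXY.i)
    (h₂ : T.pairYZ.i ≫ T.iYX = 𝟙 T.Z ≫ j) :
    ∃ w : HT.map n ⟨T.X, T.Z, j, hj⟩ T.pairXY (𝟙 T.X) T.iZY h₁ ≫
        HT.map n T.pairYZ ⟨T.X, T.Z, j, hj⟩ T.iYX (𝟙 T.Z) h₂ = 0,
      (ShortComplex.mk _ _ w).Exact := by
  subst e
  exact ⟨_, HT.exact_res_res n T h₁ h₂⟩

theorem exact_res_δ' (n : ℤ) (T : MTriple M) (j : T.Z ⟶ T.X) (hj : M.mem j)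
    (e : j = T.iZY ≫ T.iYX) (h₂ : T.pairYZ.i ≫ T.iYX = 𝟙 T.Z ≫ j) :
    ∃ w : HT.map n T.pairYZ ⟨T.X, T.Z, j, hj⟩ T.iYX (𝟙 T.Z) h₂ ≫ HT.δ n T = 0,
      (ShortComplex.mk _ _ w).Exact := by
  subst e
  exact ⟨_, HT.exact_res_δ n T h₂⟩

theorem exact_δ_res' (n : ℤ) (T : MTriple M) (j : T.Z ⟶ T.X) (hj : M.mem j)
    (e : j = T.iZY ≫ T.iYX) (h₁ : j ≫ 𝟙 T.X = T.iZY ≫ T.pairXY.i) :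
    ∃ w : HT.δ n T ≫ HT.map (n + 1) ⟨T.X, T.Z, j, hj⟩ T.pairXY (𝟙 T.X) T.iZY h₁ = 0,
      (ShortComplex.mk _ _ w).Exact := by
  subst e
  exact ⟨_, HT.exact_δ_res n T h₁⟩

/-- In the triple `Y = Y ⊆ X` the composite `H^n(X, Y) → H^n(X, Y) → H^n(Y, Y)` is zero, and it is
an isomorphism when `Y ⟶ X` is. -/
theorem isZero_of_isIso (n : ℤ) (P : MPair M) [IsIso P.i] : IsZero (HT.H n P) := by
  have hid : M.mem (𝟙 P.Y) := M.mem_of_isIso _ inferInstance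
  obtain ⟨w, -⟩ := HT.exact_res_res' n ⟨P.X, P.Y, P.Y, P.i, 𝟙 P.Y, P.mem, hid⟩ P.i P.mem
    (by simp) (by simp [MTriple.pairXY]) (by simp [MTriple.pairYZ])
  have h1 := HT.map_id n P (by simp)
  let Q : MPair M := ⟨P.Y, P.Y, 𝟙 P.Y, hid⟩
  have h2 := HT.map_comp n P Q P (inv P.i) (𝟙 P.Y) (by simp [Q]) P.i (𝟙 P.Y) (by simp [Q])
    (by simp)
  have h3 : HT.map n P P (inv P.i ≫ P.i) (𝟙 P.Y ≫ 𝟙 P.Y) (by simp) = 𝟙 _ := by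
    rw [← h1]; congr 1 <;> simp
  have h0 : HT.map n Q P P.i (𝟙 P.Y) (by simp [Q]) = 0 := by
    have w' : HT.map n P P (𝟙 P.X) (𝟙 P.Y) (by simp) ≫
      HT.map n Q P P.i (𝟙 P.Y) (by simp [Q]) = 0 := w
    rwa [h1, Category.id_comp] at w'
  rw [IsZero.iff_id_eq_zero, ← h3, h2, h0, zero_comp]

end CohomologyTheory

/-! ### Long exact sequences of a filtration -/

namespace MFiltration

variable {M : MData C} {d : ℤ} (Φ : MFiltration M d) (HT : CohomologyTheory M A)

theorem exact_resStep_res (n q : ℤ) :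
    ∃ w : Φ.resStep HT n q ≫ HT.res n (Φ.ι q) = 0, (ShortComplex.mk _ _ w).Exact :=
  HT.exact_res_res' n (Φ.tripleAt q) _ (M.mem_emptyTo _) (M.isInitialEmpty.hom_ext _ _) _ _

/-- The connecting map of the triple `∅ ⊆ X_{q-1} ⊆ X_q`, between cohomology objects written in
terms of `MData.pairOf` and `pairStep`. -/
def stepδ (n q : ℤ) : HT.H n (M.pairOf (Φ.obj (q - 1))) ⟶ HT.H (n + 1) (Φ.pairStep q) :=
  HT.δ n (Φ.tripleAt q)

theorem exact_δ_resStep (n q : ℤ) :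
    ∃ w : Φ.stepδ HT n q ≫ Φ.resStep HT (n + 1) q = 0, (ShortComplex.mk _ _ w).Exact :=
  HT.exact_δ_res' n (Φ.tripleAt q) _ (M.mem_emptyTo _) (M.isInitialEmpty.hom_ext _ _) _

theorem exact_res_δ (n q : ℤ) :
    ∃ w : HT.res n (Φ.ι q) ≫ Φ.stepδ HT n q = 0, (ShortComplex.mk _ _ w).Exact :=
  HT.exact_res_δ' n (Φ.tripleAt q) _ (M.mem_emptyTo _) (M.isInitialEmpty.hom_ext _ _) _

/-- The connecting map `H^p(X_p) ⟶ H^{p+1}(X_{p+1}, X_p)`, with `X_p` in place of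
`X_{(p+1)-1}`. -/
def conn (p : ℤ) : HT.H p (M.pairOf (Φ.obj p)) ⟶ HT.H (p + 1) (Φ.pairStep (p + 1)) :=
  eqToHom (congrArg (fun q => HT.H p (M.pairOf (Φ.obj q))) (by omega : p = p + 1 - 1)) ≫
    Φ.stepδ HT p (p + 1)

theorem res_eqToHom (n : ℤ) {X Y : C} (e : X = Y) :
    HT.res n (eqToHom e) = eqToHom (by rw [e]) := by
  subst e
  exact HT.res_id n X

theorem exact_inclStep_conn (p : ℤ) :
    ∃ w : HT.res p (Φ.inclStep p) ≫ Φ.conn HT p = 0, (ShortComplex.mk _ _ w).Exact := by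
  obtain ⟨w, hw⟩ := Φ.exact_res_δ HT p (p + 1)
  have e : Φ.obj p = Φ.obj (p + 1 - 1) := by rw [add_sub_cancel_right]
  have h1 : HT.res p (Φ.inclStep p) = HT.res p (Φ.ι (p + 1)) ≫ HT.res p (eqToHom e) :=
    HT.res_comp p _ _
  have h2 : HT.res p (eqToHom e) ≫ Φ.conn HT p = Φ.stepδ HT p (p + 1) := by
    rw [res_eqToHom]
    simp [conn]
  have w' : HT.res p (Φ.inclStep p) ≫ Φ.conn HT p = 0 := by
    rw [h1, Category.assoc, h2, w]
  exact ⟨w', ShortComplex.exact_of_iso (ShortComplex.isoMk (Iso.refl (HT.H p (M.pairOf _)))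
    (asIso (HT.res p (eqToHom e))) (Iso.refl (HT.H (p + 1) (Φ.pairStep _)))
    (by simpa using h1) (by simpa using h2)) hw⟩

variable {Φ HT}

/-! ### Good filtrations -/

/-- Outside `[0, d]` the step inclusions are isomorphisms, so a good filtration satisfies the
vanishing condition at every level. -/
theorem isZero_step (hgood : Φ.IsGood HT) {m q : ℤ} (h : m ≠ q) :
    IsZero (HT.H m (Φ.pairStep q)) := by
  by_cases h0 : 0 ≤ q
  · by_cases hd : q ≤ d
    · exact hgood q m h0 hd h
    · have : IsIso (Φ.pairStep q).i := Φ.isIsoTop q (by omega)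
      exact HT.isZero_of_isIso m _
  · have : IsIso (Φ.pairStep q).i :=
      ⟨(Φ.isInitialBot q (by omega)).to _, (Φ.isInitialBot (q - 1) (by omega)).hom_ext _ _,
        (Φ.isInitialBot q (by omega)).hom_ext _ _⟩
    exact HT.isZero_of_isIso m _

/-- `H^m(X_q)` vanishes for `q < m`. -/
theorem isZero_obj (hgood : Φ.IsGood HT) {m q : ℤ} (h : q < m) :
    IsZero (HT.H m (M.pairOf (Φ.obj q))) := by
  have base : ∀ q : ℤ, q ≤ -1 → IsZero (HT.H m (M.pairOf (Φ.obj q))) := fun q hq => by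
    have : IsIso (M.pairOf (Φ.obj q)).i :=
      ⟨(Φ.isInitialBot q hq).to _, M.isInitialEmpty.hom_ext _ _,
        (Φ.isInitialBot q hq).hom_ext _ _⟩
    exact HT.isZero_of_isIso m _
  by_cases hq : q ≤ -1
  · exact base q hq
  · induction q, (by omega : -1 ≤ q) using Int.leInduction with
    | base => exact base _ le_rfl
    | succ q hq' ih =>
      obtain ⟨w, hw⟩ := Φ.exact_resStep_res HT m (q + 1)
      have hz : IsZero (HT.H m (M.pairOf (Φ.obj (q + 1 - 1)))) := by
        rw [add_sub_cancel_right]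
        by_cases hq1 : q ≤ -1
        · exact base q hq1
        · exact ih (by omega) hq1
      exact hw.isZero_of_both_zeros ((isZero_step hgood (by omega)).eq_of_src _ _)
        (hz.eq_of_tgt _ _)

theorem epi_resStep (hgood : Φ.IsGood HT) (p : ℤ) : Epi (Φ.resStep HT p p) := by
  obtain ⟨w, hw⟩ := Φ.exact_resStep_res HT p p
  exact hw.epi_f ((isZero_obj hgood (by omega)).eq_of_tgt _ _)

/-- Precomposing the first map with an epimorphism does not change its image. -/
theorem exact_epi_comp {W X Y Z : A} {f : X ⟶ Y} {g : Y ⟶ Z} (a : W ⟶ X) [Epi a] (w : f ≫ g = 0)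
    (hw : (ShortComplex.mk f g w).Exact) :
    (ShortComplex.mk (a ≫ f) g (by rw [Category.assoc, w, comp_zero])).Exact := by
  let φ : ShortComplex.mk (a ≫ f) g (by rw [Category.assoc, w, comp_zero]) ⟶
      ShortComplex.mk f g w := { τ₁ := a, τ₂ := 𝟙 Y, τ₃ := 𝟙 Z }
  have : Epi φ.τ₁ := ‹Epi a›
  have : IsIso φ.τ₂ := inferInstanceAs (IsIso (𝟙 Y))
  have : Mono φ.τ₃ := inferInstanceAs (Mono (𝟙 Z))
  exact (ShortComplex.exact_iff_of_epi_of_isIso_of_mono φ).2 hw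

/-- The kernel of `H^{p+1}(X_{p+1}, X_p) ⟶ H^{p+1}(X_{p+1})` is the image of `d^p`. -/
theorem exact_diff_resStep (hgood : Φ.IsGood HT) (p : ℤ) :
    ∃ w : Φ.diff HT p ≫ Φ.resStep HT (p + 1) (p + 1) = 0, (ShortComplex.mk _ _ w).Exact := by
  obtain ⟨w, hw⟩ := Φ.exact_δ_resStep HT p (p + 1)
  have := epi_resStep hgood p
  let a := Φ.resStep HT p p ≫
    eqToHom (congrArg (fun q => HT.H p (M.pairOf (Φ.obj q))) (by omega : p = p + 1 - 1))
  have ha : Φ.diff HT p = a ≫ Φ.stepδ HT p (p + 1) := (Category.assoc _ _ _).symm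
  have : Epi a := epi_comp _ _
  have w' : Φ.diff HT p ≫ Φ.resStep HT (p + 1) (p + 1) = 0 := by
    rw [ha, Category.assoc, w, comp_zero]
  have h := exact_epi_comp a w hw
  refine ⟨w', ?_⟩
  convert h using 2

theorem coniveau_d (hdd : ∀ p : ℤ, Φ.diff HT p ≫ Φ.diff HT (p + 1) = 0) (p : ℤ) :
    (Φ.coniveau HT hdd).d p (p + 1) = Φ.diff HT p :=
  CochainComplex.of_d (fun p => HT.H p (Φ.pairStep p)) (fun p => Φ.diff HT p) p

theorem mono_res_ι (hgood : Φ.IsGood HT) {n q : ℤ} (h : n ≠ q) : Mono (HT.res n (Φ.ι q)) := by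
  obtain ⟨w, hw⟩ := Φ.exact_resStep_res HT n q
  exact hw.mono_g ((isZero_step hgood h).eq_of_src _ _)

theorem epi_res_ι (hgood : Φ.IsGood HT) {n q : ℤ} (h : n + 1 ≠ q) : Epi (HT.res n (Φ.ι q)) := by
  obtain ⟨w, hw⟩ := Φ.exact_res_δ HT n q
  exact hw.epi_f ((isZero_step hgood h).eq_of_tgt _ _)

theorem mono_res_inclStep (hgood : Φ.IsGood HT) {n q : ℤ} (h : n ≠ q + 1) :
    Mono (HT.res n (Φ.inclStep q)) := by
  have := mono_res_ι hgood h
  unfold inclStep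
  rw [HT.res_comp]
  infer_instance

theorem isIso_res_inclStep (hgood : Φ.IsGood HT) {n q : ℤ} (h : n < q) :
    IsIso (HT.res n (Φ.inclStep q)) := by
  have := mono_res_ι hgood (show n ≠ q + 1 by omega)
  have := epi_res_ι hgood (show n + 1 ≠ q + 1 by omega)
  have := isIso_of_mono_of_epi (HT.res n (Φ.ι (q + 1)))
  unfold inclStep
  rw [HT.res_comp]
  infer_instance

/-- Precomposing the first map with an isomorphism preserves being a kernel of the second. -/
theorem mono_exact_of_iso_comp {K K' Y Z : A} {m : K ⟶ Y} {t : Y ⟶ Z} (a : K' ⟶ K) [IsIso a]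
    (h : Mono m ∧ ∃ w : m ≫ t = 0, (ShortComplex.mk m t w).Exact) :
    Mono (a ≫ m) ∧ ∃ w : (a ≫ m) ≫ t = 0, (ShortComplex.mk (a ≫ m) t w).Exact := by
  obtain ⟨hm, w, hw⟩ := h
  exact ⟨mono_comp _ _, by rw [Category.assoc, w, comp_zero], exact_epi_comp a w hw⟩

/-- `H^p(X_{p+n+1}) ⟶ H^p(X_p)` is the kernel of the connecting map to
`H^{p+1}(X_{p+1}, X_p)`. -/
theorem mono_exact_inclAux (hgood : Φ.IsGood HT) (p : ℤ) (n : ℕ) :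
    Mono (HT.res p (Φ.inclAux p (n + 1))) ∧ ∃ w : HT.res p (Φ.inclAux p (n + 1)) ≫ Φ.conn HT p = 0,
      (ShortComplex.mk _ _ w).Exact := by
  induction n with
  | zero =>
    have e : Φ.obj (p + 1) = Φ.obj (p + (0 + 1 : ℕ)) := by simp
    have hstep : Φ.inclAux p (0 + 1) = Φ.inclStep p ≫ eqToHom e := by
      have key : ∀ (q : ℤ) (hq : p = q) (e' : Φ.obj (q + 1) = Φ.obj (p + (0 + 1 : ℕ))),
          eqToHom (congrArg Φ.obj hq) ≫ Φ.inclStep q ≫ eqToHom e' =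
            Φ.inclStep p ≫ eqToHom e := by
        rintro q rfl e'
        simp
      exact key _ (by simp) _
    rw [hstep, HT.res_comp]
    exact mono_exact_of_iso_comp _
      ⟨mono_res_inclStep hgood (by omega), Φ.exact_inclStep_conn HT p⟩
  | succ n ih =>
    have := isIso_res_inclStep (HT := HT) (Φ := Φ) hgood
      (show p < p + ((n + 1 : ℕ) : ℤ) by push_cast; omega)
    have hstep : Φ.inclAux p (n + 1 + 1) = Φ.inclAux p (n + 1) ≫ Φ.inclStep (p + (n + 1 : ℕ)) ≫
      eqToHom (congrArg Φ.obj (by push_cast; ring)) := rfl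
    rw [hstep, HT.res_comp, HT.res_comp]
    exact mono_exact_of_iso_comp _ ih

/-- The restriction `H^p(X) ⟶ H^p(X_p)` is the kernel of the connecting map to
`H^{p+1}(X_{p+1}, X_p)`. -/
theorem mono_exact_resTop (hgood : Φ.IsGood HT) (p : ℤ) (hpd : p ≤ d) :
    Mono (Φ.resTop HT p p hpd) ∧ ∃ w : Φ.resTop HT p p hpd ≫ Φ.conn HT p = 0,
      (ShortComplex.mk _ _ w).Exact := by
  have hres : Φ.resTop HT p p hpd = HT.res p (Φ.inclLE p d hpd) := rfl
  rw [hres]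
  unfold inclLE
  rw [HT.res_comp]
  refine mono_exact_of_iso_comp _ ?_
  obtain h | ⟨n, h⟩ : (d - p).toNat = 0 ∨ ∃ n : ℕ, (d - p).toNat = n + 1 := by
    cases (d - p).toNat <;> simp
  · -- here `p = d`, and `H^{p+1}(X_{d+1}, X_d) = 0` because `X_d = X_{d+1}`
    rw [h]
    have : IsIso (Φ.inclAux p 0) := inferInstanceAs (IsIso (eqToHom _))
    have : IsIso (Φ.pairStep (p + 1)).i := Φ.isIsoTop (p + 1) (by omega)
    have hz := HT.isZero_of_isIso (p + 1) (Φ.pairStep (p + 1))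
    refine ⟨inferInstance, hz.eq_of_tgt _ _, ?_⟩
    rw [ShortComplex.exact_iff_epi _ (hz.eq_of_tgt _ _)]
    exact inferInstanceAs (Epi (HT.res p (Φ.inclAux p 0)))
  · rw [h]
    exact mono_exact_inclAux hgood p n

end MFiltration

/-! ### Degeneration -/

/-- degeneration of the coniveau spectral sequence for good filtrations.
For a good `M`-filtration `Φ : ∅ = X_{-1} ⊆ X_0 ⊆ ⋯ ⊆ X_d = X` and every `0 ≤ p ≤ d`:
(i) the restriction `H^p(X) ⟶ H^p(X_p)` is a monomorphism, and
(ii) there is a unique isomorphism `θ^p : H^p(C^*(X)) ⟶ H^p(X)` from the `p`-th cohomology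
object of the coniveau complex to `H^p(X)` such that the composite of the canonical
epimorphism `ker(d^p) → H^p(C^*(X))`, `θ^p`, and the restriction `H^p(X) → H^p(X_p)` equals
the composite of the inclusion `ker(d^p) ↪ H^p(X_p, X_{p-1})` with the functoriality map
`H^p(X_p, X_{p-1}) → H^p(X_p)`. -/
theorem coniveau_degeneration {C : Type u} [Category.{v} C] {M : MData C}
    {A : Type u'} [Category.{v'} A] [Abelian A] (HT : CohomologyTheory M A)
    {d : ℤ} (Φ : MFiltration M d) (hgood : Φ.IsGood HT)
    (hdd : ∀ p : ℤ, Φ.diff HT p ≫ Φ.diff HT (p + 1) = 0)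
    (p : ℤ) (hp0 : 0 ≤ p) (hpd : p ≤ d) :
    Mono (Φ.resTop HT p p hpd) ∧
    ∃! θ : (Φ.coniveau HT hdd).homology p ⟶ HT.H p (M.pairOf (Φ.obj d)),
      IsIso θ ∧
      (Φ.coniveau HT hdd).homologyπ p ≫ θ ≫ Φ.resTop HT p p hpd =
        (Φ.coniveau HT hdd).iCycles p ≫ Φ.resStep HT p p := by
  obtain ⟨hm, w₂, h₂⟩ := MFiltration.mono_exact_resTop hgood p hpd
  refine ⟨hm, ?_⟩
  have := MFiltration.epi_resStep hgood p
  -- `prev p` and `next p` are only propositionally `p - 1` and `p + 1`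
  have hprev : ∀ i : ℤ, i + 1 = p →
      ∃ w : (Φ.coniveau HT hdd).d i p ≫ Φ.resStep HT p p = 0, (ShortComplex.mk _ _ w).Exact := by
    rintro i rfl
    rw [MFiltration.coniveau_d]
    exact MFiltration.exact_diff_resStep hgood i
  have hnext : ∀ j : ℤ, p + 1 = j →
      ∃ t : HT.H p (M.pairOf (Φ.obj p)) ⟶ (Φ.coniveau HT hdd).X j,
        (Φ.coniveau HT hdd).d p j = Φ.resStep HT p p ≫ t ∧
        ∃ w : Φ.resTop HT p p hpd ≫ t = 0, (ShortComplex.mk _ _ w).Exact := by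
    rintro j rfl
    exact ⟨Φ.conn HT p, MFiltration.coniveau_d hdd p, w₂, h₂⟩
  obtain ⟨w₁, h₁⟩ := hprev ((ComplexShape.up ℤ).prev p) (by simp)
  obtain ⟨t, hg, w, h⟩ := hnext ((ComplexShape.up ℤ).next p) (by simp)
  have : Epi (C := A) (X := ((Φ.coniveau HT hdd).sc p).X₂) (Φ.resStep HT p p) := this
  exact existsUnique_homology_iso ((Φ.coniveau HT hdd).sc p) (Φ.resStep HT p p) t
    (Φ.resTop HT p p hpd) hg w₁ h₁ w h
end

section
/- Let H be a cohomology theory on C^□ with values in an abelian category A, and let Y and Z be M-subobjects of an object X such that the join Y ∪ Z equals X and the intersection Y ∩ Z exists as an M-subobject of both Y and Z. Assume excision holds for this covering: for every n, the map H^n(X, Z) → H^n(Y, Y ∩ Z) induced by the morphism of pairs (Y, Y ∩ Z) → (X, Z) is an isomorphism. Then the Mayer–Vietoris sequence ⋯ → H^n(X) → H^n(Y) ⊕ H^n(Z) → H^n(Y ∩ Z) → H^{n+1}(X) → ⋯ is exact, where the first map is the pair of restrictions (i_Y^*, i_Z^*), the second map is the difference of restrictions j_Y^* − j_Z^*, and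 the connecting morphism H^n(Y ∩ Z) → H^{n+1}(X) is the composite of the connecting morphism δ^n : H^n(Y ∩ Z) → H^{n+1}(Y, Y ∩ Z) of the triple ∅ ⊆ Y ∩ Z ⊆ Y, the inverse of the excision isomorphism H^{n+1}(X, Z) ≅ H^{n+1}(Y, Y ∩ Z), and the functoriality map H^{n+1}(X, Z) → H^{n+1}(X). -/
/-! The inclusions of pairs give a morphism from the long exact sequence of `(X, Z)` to that of
`(Y, Y ∩ Z)`. Excision says that every third vertical map, the one between relative groups, is
an isomorphism, and Mayer–Vietoris is the resulting statement of homological algebra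
(the Barratt–Whitehead lemma), proved here by diagram chases on generalized elements:
`ladder_exact_biprod`, `ladder_exact_right` and `ladder_exact_left`.

What is specific to the cohomology theory is that the rows are exact (`mvRow_exact`, the triple
axioms applied to `∅ ⊆ Z ⊆ X`) and that the squares commute (`CohomologyTheory.map_comp_eq`,
i.e. functoriality, and the naturality of the connecting morphism).
-/

open CategoryTheory CategoryTheory.Limits

universe v u v' u'

variable {C : Type u} [Category.{v} C]

variable {A : Type u'} [Category.{v'} A] [Abelian A]

section MayerVietoris

variable {C : Type u} [Category.{v} C] {M : MData C}
variable {A : Type u'} [Category.{v'} A] [Abelian A] (HT : CohomologyTheory M A)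
variable (X₀ Y₀ Z₀ W : C) (iY : Y₀ ⟶ X₀) (iZ : Z₀ ⟶ X₀) (jY : W ⟶ Y₀) (jZ : W ⟶ Z₀)

/-- The pair `(X, Z)`. -/
def mvPairXZ (hiZ : M.mem iZ) : MPair M := ⟨X₀, Z₀, iZ, hiZ⟩

/-- The pair `(Y, Y ∩ Z)`. -/
def mvPairYW (hjY : M.mem jY) : MPair M := ⟨Y₀, W, jY, hjY⟩

/-- The excision comparison map `H^n(X, Z) ⟶ H^n(Y, Y ∩ Z)` induced by the morphism of
pairs `(Y, Y ∩ Z) → (X, Z)`. -/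
def mvExcision (hiZ : M.mem iZ) (hjY : M.mem jY) (hsq : jY ≫ iY = jZ ≫ iZ) (n : ℤ) :
    HT.H n (mvPairXZ X₀ Z₀ iZ hiZ) ⟶ HT.H n (mvPairYW Y₀ W jY hjY) :=
  HT.map n (mvPairYW Y₀ W jY hjY) (mvPairXZ X₀ Z₀ iZ hiZ) iY jZ hsq

/-- The restriction `H^n(X) ⟶ H^n(Y)` induced by `i : Y ⟶ X`. -/
def mvRes (i : Y₀ ⟶ X₀) (n : ℤ) : HT.H n (M.pairOf X₀) ⟶ HT.H n (M.pairOf Y₀) :=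
  HT.map n (M.pairOf Y₀) (M.pairOf X₀) i (𝟙 M.empty) (M.isInitialEmpty.hom_ext _ _)

/-- The first Mayer–Vietoris map `(i_Y^*, i_Z^*) : H^n(X) ⟶ H^n(Y) ⊞ H^n(Z)`. -/
noncomputable def mvFst (n : ℤ) : HT.H n (M.pairOf X₀) ⟶ HT.H n (M.pairOf Y₀) ⊞ HT.H n (M.pairOf Z₀) :=
  biprod.lift (mvRes HT X₀ Y₀ iY n) (mvRes HT X₀ Z₀ iZ n)

/-- The second Mayer–Vietoris map `j_Y^* - j_Z^* : H^n(Y) ⊞ H^n(Z) ⟶ H^n(Y ∩ Z)`. -/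
noncomputable def mvSnd (n : ℤ) : HT.H n (M.pairOf Y₀) ⊞ HT.H n (M.pairOf Z₀) ⟶ HT.H n (M.pairOf W) :=
  biprod.desc (mvRes HT Y₀ W jY n) (-(mvRes HT Z₀ W jZ n))

/-- The triple `∅ ⊆ Y ∩ Z ⊆ Y`. -/
def mvTriple (hjY : M.mem jY) : MTriple M :=
  ⟨Y₀, W, M.empty, jY, M.isInitialEmpty.to W, hjY, M.mem_emptyTo W⟩

/-- The functoriality map `H^n(X, Z) ⟶ H^n(X)`. -/
def mvResXZ (hiZ : M.mem iZ) (n : ℤ) :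
    HT.H n (mvPairXZ X₀ Z₀ iZ hiZ) ⟶ HT.H n (M.pairOf X₀) :=
  HT.map n (M.pairOf X₀) (mvPairXZ X₀ Z₀ iZ hiZ) (𝟙 X₀) (M.isInitialEmpty.to Z₀)
    (M.isInitialEmpty.hom_ext _ _)

/-- The Mayer–Vietoris connecting morphism `H^n(Y ∩ Z) ⟶ H^{n+1}(X)`: the composite of the
connecting morphism `δ^n : H^n(Y ∩ Z) → H^{n+1}(Y, Y ∩ Z)` of the triple `∅ ⊆ Y ∩ Z ⊆ Y`,
the inverse of the excision isomorphism `H^{n+1}(X, Z) ≅ H^{n+1}(Y, Y ∩ Z)`, and the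
functoriality map `H^{n+1}(X, Z) → H^{n+1}(X)`. -/
noncomputable def mvDelta (hiZ : M.mem iZ) (hjY : M.mem jY) (hsq : jY ≫ iY = jZ ≫ iZ)
    (hexc : ∀ n : ℤ, IsIso (mvExcision HT X₀ Y₀ Z₀ W iY iZ jY jZ hiZ hjY hsq n)) (n : ℤ) :
    HT.H n (M.pairOf W) ⟶ HT.H (n + 1) (M.pairOf X₀) :=
  HT.δ n (mvTriple Y₀ W jY hjY) ≫
    @inv A _ _ _ (mvExcision HT X₀ Y₀ Z₀ W iY iZ jY jZ hiZ hjY hsq (n + 1)) (hexc (n + 1)) ≫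
    mvResXZ HT X₀ Z₀ iZ hiZ (n + 1)

/-! ### Homological algebra of a ladder whose every third rung is invertible -/

section Ladder

/-! Generalized elements are chased in a commutative ladder with rows
`A₀ ⟶ B₀ ⟶ C₀ ⟶ A₁ ⟶ B₁ ⟶ C₁` (maps `f₀, g₀, d, f₁, g₁`) and
`A₀' ⟶ B₀' ⟶ C₀' ⟶ A₁' ⟶ B₁'` (maps `f₀', g₀', d', f₁'`), and vertical maps `a₀, b₀, c₀, a₁, b₁`.
-/

variable {D : Type u'} [Category.{v'} D] [Abelian D]
  {A₀ B₀ C₀ A₁ B₁ C₁ A₀' B₀' C₀' A₁' B₁' : D}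

/-- Exactness of `B₀ ⟶ B₀' ⊞ C₀ ⟶ C₀'`, where `a₀` is epi and `a₁` is mono. -/
theorem ladder_exact_biprod
    {f₀ : A₀ ⟶ B₀} {g₀ : B₀ ⟶ C₀} {d : C₀ ⟶ A₁}
    {f₀' : A₀' ⟶ B₀'} {g₀' : B₀' ⟶ C₀'} {d' : C₀' ⟶ A₁'}
    {a₀ : A₀ ⟶ A₀'} {b₀ : B₀ ⟶ B₀'} {c₀ : C₀ ⟶ C₀'} {a₁ : A₁ ⟶ A₁'}
    (hf : f₀ ≫ b₀ = a₀ ≫ f₀') (hg : g₀ ≫ c₀ = b₀ ≫ g₀') (hd : d ≫ a₁ = c₀ ≫ d')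
    (_ : Epi a₀) (_ : Mono a₁)
    (wfg : f₀ ≫ g₀ = 0) (wgd : g₀ ≫ d = 0) (hgd : (ShortComplex.mk _ _ wgd).Exact)
    (wfg' : f₀' ≫ g₀' = 0) (hfg' : (ShortComplex.mk _ _ wfg').Exact)
    (wgd' : g₀' ≫ d' = 0) :
    ∃ w : biprod.lift b₀ g₀ ≫ biprod.desc g₀' (-c₀) = 0, (ShortComplex.mk _ _ w).Exact := by
  refine ⟨by simp [hg], ?_⟩
  rw [ShortComplex.exact_iff_exact_up_to_refinements]
  intro T x hx
  dsimp at x hx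
  have hx' : (x ≫ biprod.fst) ≫ g₀' = (x ≫ biprod.snd) ≫ c₀ := by
    have hx₁ : x ≫ (biprod.fst ≫ g₀' + biprod.snd ≫ (-c₀)) = 0 := by
      rw [← biprod.desc_eq]
      exact hx
    simpa [Preadditive.comp_add, add_neg_eq_zero] using hx₁
  -- The second component dies in `A₁`, because `a₁` is mono; hence it lifts to `B₀`.
  have hdz : (x ≫ biprod.snd) ≫ d = 0 := by
    rw [← cancel_mono a₁, zero_comp, Category.assoc, hd, ← Category.assoc, ← hx',
      Category.assoc, wgd', comp_zero]
  obtain ⟨T₁, p₁, _, b, hb⟩ := hgd.exact_up_to_refinements (x ≫ biprod.snd) hdz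
  dsimp at b hb
  -- The error in the first component comes from `A₀'`, and then from `A₀`.
  obtain ⟨T₂, p₂, _, e', he'⟩ := hfg'.exact_up_to_refinements
    (p₁ ≫ x ≫ biprod.fst - b ≫ b₀) (by
      dsimp
      rw [Preadditive.sub_comp, sub_eq_zero, Category.assoc, hx', Category.assoc b, ← hg,
        ← Category.assoc b, ← hb]
      simp only [Category.assoc])
  dsimp at e' he'
  obtain ⟨T₃, p₃, _, e, he⟩ := surjective_up_to_refinements_of_epi a₀ e'
  refine ⟨T₃, p₃ ≫ p₂ ≫ p₁, inferInstance, p₃ ≫ p₂ ≫ b + e ≫ f₀, ?_⟩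
  dsimp
  apply biprod.hom_ext
  · have h : p₃ ≫ p₂ ≫ (p₁ ≫ x ≫ biprod.fst - b ≫ b₀) = e ≫ f₀ ≫ b₀ := by
      rw [he', ← Category.assoc p₃, he, Category.assoc, hf]
    simp only [Preadditive.comp_sub, sub_eq_iff_eq_add] at h
    simp [h, add_comm]
  · simp [wfg, ← hb]

/-- Exactness of `B₀' ⊞ C₀ ⟶ C₀' ⟶ B₁`, where `a₁` is an isomorphism. -/
theorem ladder_exact_right
    {d : C₀ ⟶ A₁} {f₁ : A₁ ⟶ B₁} {g₀' : B₀' ⟶ C₀'} {d' : C₀' ⟶ A₁'}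
    {c₀ : C₀ ⟶ C₀'} {a₁ : A₁ ⟶ A₁'} (_ : IsIso a₁)
    (hd : d ≫ a₁ = c₀ ≫ d')
    (wdf : d ≫ f₁ = 0) (hdf : (ShortComplex.mk _ _ wdf).Exact)
    (wgd' : g₀' ≫ d' = 0) (hgd' : (ShortComplex.mk _ _ wgd').Exact) :
    ∃ w : biprod.desc g₀' (-c₀) ≫ d' ≫ inv a₁ ≫ f₁ = 0, (ShortComplex.mk _ _ w).Exact := by
  refine ⟨by
    apply biprod.hom_ext'
    · simp [reassoc_of% wgd']
    · simp [← reassoc_of% hd, wdf], ?_⟩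
  rw [ShortComplex.exact_iff_exact_up_to_refinements]
  intro T x hx
  dsimp at x hx
  obtain ⟨T₁, p₁, _, c, hc⟩ := hdf.exact_up_to_refinements (x ≫ d' ≫ inv a₁) (by simpa using hx)
  dsimp at c hc
  have hc' : p₁ ≫ x ≫ d' = c ≫ c₀ ≫ d' := by
    rw [← hd, ← Category.assoc c, ← hc]
    simp
  obtain ⟨T₂, p₂, _, b, hb⟩ := hgd'.exact_up_to_refinements (p₁ ≫ x - c ≫ c₀)
    (by simp [Preadditive.sub_comp, hc'])
  dsimp at b hb
  refine ⟨T₂, p₂ ≫ p₁, inferInstance, biprod.lift b (-(p₂ ≫ c)), ?_⟩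
  simp only [Preadditive.comp_sub, sub_eq_iff_eq_add] at hb
  simp [hb]

/-- Exactness of `C₀' ⟶ B₁ ⟶ B₁' ⊞ C₁`, where `a₁` is an isomorphism. -/
theorem ladder_exact_left
    {f₁ : A₁ ⟶ B₁} {g₁ : B₁ ⟶ C₁} {d' : C₀' ⟶ A₁'} {f₁' : A₁' ⟶ B₁'}
    {a₁ : A₁ ⟶ A₁'} {b₁ : B₁ ⟶ B₁'} (_ : IsIso a₁)
    (hf : f₁ ≫ b₁ = a₁ ≫ f₁')
    (wfg : f₁ ≫ g₁ = 0) (hfg : (ShortComplex.mk _ _ wfg).Exact)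
    (wdf' : d' ≫ f₁' = 0) (hdf' : (ShortComplex.mk _ _ wdf').Exact) :
    ∃ w : (d' ≫ inv a₁ ≫ f₁) ≫ biprod.lift b₁ g₁ = 0, (ShortComplex.mk _ _ w).Exact := by
  refine ⟨by
    apply biprod.hom_ext
    · simp [hf, wdf']
    · simp [wfg], ?_⟩
  rw [ShortComplex.exact_iff_exact_up_to_refinements]
  intro T x hx
  dsimp at x hx
  have hxb : x ≫ b₁ = 0 := by simpa using hx =≫ biprod.fst
  have hxg : x ≫ g₁ = 0 := by simpa using hx =≫ biprod.snd
  obtain ⟨T₁, p₁, _, e, he⟩ := hfg.exact_up_to_refinements x hxg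
  dsimp at e he
  obtain ⟨T₂, p₂, _, c, hc⟩ := hdf'.exact_up_to_refinements (e ≫ a₁) (by
    dsimp
    rw [Category.assoc, ← hf, ← Category.assoc, ← he, Category.assoc, hxb, comp_zero])
  dsimp at c hc
  refine ⟨T₂, p₂ ≫ p₁, inferInstance, c, ?_⟩
  dsimp
  rw [← Category.assoc c, ← hc]
  simp [he]

end Ladder

/-! ### The ladder of the pairs `(X, Z)` and `(Y, Y ∩ Z)` -/

/-- Two factorizations of the same morphism of pairs induce the same composite map. -/
theorem CohomologyTheory.map_comp_eq {C : Type u} [Category.{v} C] {M : MData C}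
    {A : Type u'} [Category.{v'} A] [Abelian A] (HT : CohomologyTheory M A) (n : ℤ)
    {P Q Q' R : MPair M} {fX : P.X ⟶ Q.X} {fY : P.Y ⟶ Q.Y} {hf : P.i ≫ fX = fY ≫ Q.i}
    {gX : Q.X ⟶ R.X} {gY : Q.Y ⟶ R.Y} {hg : Q.i ≫ gX = gY ≫ R.i}
    {fX' : P.X ⟶ Q'.X} {fY' : P.Y ⟶ Q'.Y} {hf' : P.i ≫ fX' = fY' ≫ Q'.i}
    {gX' : Q'.X ⟶ R.X} {gY' : Q'.Y ⟶ R.Y} {hg' : Q'.i ≫ gX' = gY' ≫ R.i}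
    (hX : fX ≫ gX = fX' ≫ gX') (hY : fY ≫ gY = fY' ≫ gY') :
    HT.map n Q R gX gY hg ≫ HT.map n P Q fX fY hf =
      HT.map n Q' R gX' gY' hg' ≫ HT.map n P Q' fX' fY' hf' := by
  have h : P.i ≫ (fX ≫ gX) = (fY ≫ gY) ≫ R.i := by
    rw [← Category.assoc, hf, Category.assoc, hg, Category.assoc]
  have h' : P.i ≫ (fX' ≫ gX') = (fY' ≫ gY') ≫ R.i := by rw [← hX, ← hY, h]
  rw [← HT.map_comp n P Q R fX fY hf gX gY hg h,
    ← HT.map_comp n P Q' R fX' fY' hf' gX' gY' hg' h']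
  congr 1

/-- The long exact sequence of the pair `(X, Z)`, i.e. of the triple `∅ ⊆ Z ⊆ X`, written with
the absolute groups `H^n(X, ∅)`. The triple presents the inclusion `∅ ⟶ X` as a composite through
`Z`, which is equal to the initial morphism used in `MData.pairOf`, but not definitionally. -/
theorem mvRow_exact (hiZ : M.mem iZ) (n : ℤ) :
    (∃ w : mvResXZ HT X₀ Z₀ iZ hiZ n ≫ mvRes HT X₀ Z₀ iZ n = 0,
      (ShortComplex.mk _ _ w).Exact) ∧
    (∃ w : mvRes HT X₀ Z₀ iZ n ≫ HT.δ n (mvTriple X₀ Z₀ iZ hiZ) = 0,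
      (ShortComplex.mk _ _ w).Exact) ∧
    (∃ w : HT.δ n (mvTriple X₀ Z₀ iZ hiZ) ≫ mvResXZ HT X₀ Z₀ iZ hiZ (n + 1) = 0,
      (ShortComplex.mk _ _ w).Exact) := by
  let T : MTriple M := mvTriple X₀ Z₀ iZ hiZ
  -- Replace the composite `∅ ⟶ Z ⟶ X` by an arbitrary morphism equal to it.
  have key : ∀ (j : M.empty ⟶ X₀) (hj : M.mem j)
      (h₁ : j ≫ 𝟙 X₀ = M.isInitialEmpty.to Z₀ ≫ iZ)
      (h₂ : M.isInitialEmpty.to Z₀ ≫ iZ = 𝟙 M.empty ≫ j),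
      M.isInitialEmpty.to Z₀ ≫ iZ = j →
      (∃ w : HT.map n ⟨X₀, M.empty, j, hj⟩ T.pairXY (𝟙 X₀) (M.isInitialEmpty.to Z₀) h₁ ≫
          HT.map n T.pairYZ ⟨X₀, M.empty, j, hj⟩ iZ (𝟙 M.empty) h₂ = 0,
        (ShortComplex.mk _ _ w).Exact) ∧
      (∃ w : HT.map n T.pairYZ ⟨X₀, M.empty, j, hj⟩ iZ (𝟙 M.empty) h₂ ≫ HT.δ n T = 0,
        (ShortComplex.mk _ _ w).Exact) ∧
      (∃ w : HT.δ n T ≫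
          HT.map (n + 1) ⟨X₀, M.empty, j, hj⟩ T.pairXY (𝟙 X₀) (M.isInitialEmpty.to Z₀) h₁ = 0,
        (ShortComplex.mk _ _ w).Exact) := by
    rintro j hj h₁ h₂ rfl
    exact ⟨⟨_, HT.exact_res_res n T h₁ h₂⟩, ⟨_, HT.exact_res_δ n T h₂⟩,
      ⟨_, HT.exact_δ_res n T h₁⟩⟩
  exact key (M.isInitialEmpty.to X₀) (M.mem_emptyTo X₀) (M.isInitialEmpty.hom_ext _ _)
    (M.isInitialEmpty.hom_ext _ _) (M.isInitialEmpty.hom_ext _ _)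

/-- Restriction commutes with the functoriality maps from relative to absolute cohomology. -/
theorem mvResXZ_comp_mvRes (hiZ : M.mem iZ) (hjY : M.mem jY) (hsq : jY ≫ iY = jZ ≫ iZ) (n : ℤ) :
    mvResXZ HT X₀ Z₀ iZ hiZ n ≫ mvRes HT X₀ Y₀ iY n =
      mvExcision HT X₀ Y₀ Z₀ W iY iZ jY jZ hiZ hjY hsq n ≫ mvResXZ HT Y₀ W jY hjY n :=
  HT.map_comp_eq n ((Category.comp_id _).trans (Category.id_comp _).symm)
    (M.isInitialEmpty.hom_ext _ _)

theorem mvRes_comp_mvRes (hsq : jY ≫ iY = jZ ≫ iZ) (n : ℤ) :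
    mvRes HT X₀ Z₀ iZ n ≫ mvRes HT Z₀ W jZ n = mvRes HT X₀ Y₀ iY n ≫ mvRes HT Y₀ W jY n :=
  HT.map_comp_eq n hsq.symm rfl

/-- The excision map commutes with the connecting morphisms. -/
theorem δ_comp_mvExcision (hiZ : M.mem iZ) (hjY : M.mem jY) (hsq : jY ≫ iY = jZ ≫ iZ) (n : ℤ) :
    HT.δ n (mvTriple X₀ Z₀ iZ hiZ) ≫
        mvExcision HT X₀ Y₀ Z₀ W iY iZ jY jZ hiZ hjY hsq (n + 1) =
      mvRes HT Z₀ W jZ n ≫ HT.δ n (mvTriple Y₀ W jY hjY) :=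
  (HT.δ_natural n (mvTriple Y₀ W jY hjY) (mvTriple X₀ Z₀ iZ hiZ) iY jZ (𝟙 M.empty) hsq
    (M.isInitialEmpty.hom_ext _ _)).symm

/-- Mayer–Vietoris.  Let `Y` and `Z` be `M`-subobjects of `X` with
`Y ∪ Z = X` and intersection `Y ∩ Z`.  If excision holds for this covering (each
`H^n(X, Z) → H^n(Y, Y ∩ Z)` is an isomorphism), then the Mayer–Vietoris sequence
`⋯ → H^n(X) → H^n(Y) ⊞ H^n(Z) → H^n(Y ∩ Z) → H^{n+1}(X) → ⋯` is exact, with first map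
`(i_Y^*, i_Z^*)`, second map `j_Y^* - j_Z^*`, and the connecting morphism described above. -/
theorem mayer_vietoris (hiY : M.mem iY) (hiZ : M.mem iZ) (hjY : M.mem jY) (hjZ : M.mem jZ)
    (hsq : jY ≫ iY = jZ ≫ iZ)
    (hexc : ∀ n : ℤ, IsIso (mvExcision HT X₀ Y₀ Z₀ W iY iZ jY jZ hiZ hjY hsq n)) :
    ∀ n : ℤ,
      ∃ w₁ : mvFst HT X₀ Y₀ Z₀ iY iZ n ≫ mvSnd HT Y₀ Z₀ W jY jZ n = 0,
      ∃ w₂ : mvSnd HT Y₀ Z₀ W jY jZ n ≫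
          mvDelta HT X₀ Y₀ Z₀ W iY iZ jY jZ hiZ hjY hsq hexc n = 0,
      ∃ w₃ : mvDelta HT X₀ Y₀ Z₀ W iY iZ jY jZ hiZ hjY hsq hexc n ≫
          mvFst HT X₀ Y₀ Z₀ iY iZ (n + 1) = 0,
      (ShortComplex.mk _ _ w₁).Exact ∧ (ShortComplex.mk _ _ w₂).Exact ∧
        (ShortComplex.mk _ _ w₃).Exact := by
  intro n
  obtain ⟨⟨wfg, -⟩, ⟨wgd, hgd⟩, ⟨wdf, hdf⟩⟩ := mvRow_exact HT X₀ Z₀ iZ hiZ n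
  obtain ⟨⟨wfg₁, hfg₁⟩, -⟩ := mvRow_exact HT X₀ Z₀ iZ hiZ (n + 1)
  obtain ⟨⟨wfg', hfg'⟩, ⟨wgd', hgd'⟩, ⟨wdf', hdf'⟩⟩ := mvRow_exact HT Y₀ W jY hjY n
  have hf := mvResXZ_comp_mvRes HT X₀ Y₀ Z₀ W iY iZ jY jZ hiZ hjY hsq
  have hg := mvRes_comp_mvRes HT X₀ Y₀ Z₀ W iY iZ jY jZ hsq n
  have hd := δ_comp_mvExcision HT X₀ Y₀ Z₀ W iY iZ jY jZ hiZ hjY hsq n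
  have hepi : Epi (mvExcision HT X₀ Y₀ Z₀ W iY iZ jY jZ hiZ hjY hsq n) :=
    (hexc n).epi_of_iso
  have hmono : Mono (mvExcision HT X₀ Y₀ Z₀ W iY iZ jY jZ hiZ hjY hsq (n + 1)) :=
    (hexc (n + 1)).mono_of_iso
  obtain ⟨w₁, h₁⟩ := ladder_exact_biprod (hf n) hg hd hepi hmono wfg wgd hgd wfg' hfg' wgd'
  obtain ⟨w₂, h₂⟩ := ladder_exact_right (hexc (n + 1)) hd wdf hdf wgd' hgd'
  obtain ⟨w₃, h₃⟩ := ladder_exact_left (hexc (n + 1)) (hf (n + 1)) wfg₁ hfg₁ wdf' hdf'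
  exact ⟨w₁, w₂, w₃, h₁, h₂, h₃⟩

end MayerVietoris
end
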